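/- arXiv:1912.12877 — 13 statements merged into one kernel-verified Lean document; each statement's English description precedes it below -/
import Mathlib

section
/- For all sounds x, y, a, b: if x ∼ a, y ∼ b, and L x y, then L a b. -/
/-- `x` is identical-pitched with `y`: neither is lower-pitched than the other. -/
def Ident {S : Type*} (L : S → S → Prop) (x y : S) : Prop := ¬ L x y ∧ ¬ L y x

theorem stmt_0 {S : Type*} (L : S → S → Prop)
    (A1 : ∀ x : S, ¬ L x x)
    (A2 : ∀ x y z : S, L x y → L y z → L x z)
    (A3 : ∃ x y : S, L x y)
    (A4 : ∀ x y z : S, L x y → ¬ (Ident L x z ∧ Ident L y z))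
    (A5a : ∀ x : S, ∃ a b : S, L a x ∧ L x b)
    (A5b : ∀ x y : S, L x y → ∃ a : S, L x a ∧ L a y) :
    ∀ x y a b : S, Ident L x a → Ident L y b → L x y → L a b := by
  intro x y a b hxa hyb hxy
  have hay : L a y := by
    by_contra h
    exact A4 x y a hxy ⟨hxa, fun hya => hxa.1 (A2 x y a hxy hya), h⟩
  by_contra h
  exact A4 a y b hay ⟨⟨h, fun hba => hyb.2 (A2 b a y hba hay)⟩, hyb⟩
end

section
/- For every sound θ, the relation 'being on the same side of θ' is an equivalence relation on the set {x : ¬(x ∼ θ)}: it is reflexive, symmetric, and transitive there. -/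
/-- `x` is between-pitched `p` and `q`. -/
def Between {S : Type*} (L : S → S → Prop) (x p q : S) : Prop :=
  (L p x ∧ L x q) ∨ (L q x ∧ L x p)

/-- `x` and `y` are on the same side of `θ`. -/
def SameSide {S : Type*} (L : S → S → Prop) (θ x y : S) : Prop :=
  Ident L x y ∨ ¬ Between L θ x y

theorem stmt_1 {S : Type*} (L : S → S → Prop)
    (A1 : ∀ x : S, ¬ L x x)
    (A2 : ∀ x y z : S, L x y → L y z → L x z)
    (A3 : ∃ x y : S, L x y)
    (A4 : ∀ x y z : S, L x y → ¬ (Ident L x z ∧ Ident L y z))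
    (A5a : ∀ x : S, ∃ a b : S, L a x ∧ L x b)
    (A5b : ∀ x y : S, L x y → ∃ a : S, L x a ∧ L a y)
    (θ : S) :
    (∀ x : S, ¬ Ident L x θ → SameSide L θ x x) ∧
    (∀ x y : S, ¬ Ident L x θ → ¬ Ident L y θ →
      SameSide L θ x y → SameSide L θ y x) ∧
    (∀ x y z : S, ¬ Ident L x θ → ¬ Ident L y θ → ¬ Ident L z θ →
      SameSide L θ x y → SameSide L θ y z → SameSide L θ x z) := by
  have key : ∀ x y : S, SameSide L θ x y ↔ ¬ Between L θ x y := by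
    intro x y
    constructor
    · rintro (⟨h1, h2⟩ | h)
      · rintro (⟨h3, h4⟩ | ⟨h3, h4⟩)
        · exact h1 (A2 _ _ _ h3 h4)
        · exact h2 (A2 _ _ _ h3 h4)
      · exact h
    · exact Or.inr
  have asym : ∀ x y : S, L x y → ¬ L y x := fun x y h h' => A1 x (A2 _ _ _ h h')
  simp only [key]
  unfold Between Ident
  refine ⟨fun x _ => ?_, fun x y _ _ => ?_, fun x y z _ _ _ => ?_⟩
  · have := asym x θ
    tauto
  · tauto
  · have := asym x θ
    have := asym y θ
    have := asym z θ
    tauto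
end

section
/- Sound Separation Property: for every sound θ, the relation 'being on the same side of θ' on {x : ¬(x ∼ θ)} has exactly two equivalence classes, namely the low side {x : L x θ} and the high side {x : L θ x}: both are nonempty, they are disjoint, their union is {x : ¬(x ∼ θ)}, any two sounds in the same one of these two sets are on the same side of θ, and any sound of the low side and any sound of the high side are not on the same side of θ. -/
theorem stmt_2 {S : Type*} (L : S → S → Prop)
    (A1 : ∀ x : S, ¬ L x x)
    (A2 : ∀ x y z : S, L x y → L y z → L x z)
    (A3 : ∃ x y : S, L x y)
    (A4 : ∀ x y z : S, L x y → ¬ (Ident L x z ∧ Ident L y z))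
    (A5a : ∀ x : S, ∃ a b : S, L a x ∧ L x b)
    (A5b : ∀ x y : S, L x y → ∃ a : S, L x a ∧ L a y)
    (θ : S) :
    (∃ x : S, L x θ) ∧ (∃ x : S, L θ x) ∧
    (∀ x : S, ¬ (L x θ ∧ L θ x)) ∧
    (∀ x : S, ¬ Ident L x θ ↔ (L x θ ∨ L θ x)) ∧
    (∀ x y : S, L x θ → L y θ → SameSide L θ x y) ∧
    (∀ x y : S, L θ x → L θ y → SameSide L θ x y) ∧
    (∀ x y : S, L x θ → L θ y → ¬ SameSide L θ x y) := by
  have asym : ∀ x y : S, L x y → ¬ L y x := fun x y h h' => A1 x (A2 x y x h h')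
  obtain ⟨a, b, ha, hb⟩ := A5a θ
  refine ⟨⟨a, ha⟩, ⟨b, hb⟩, fun x h => asym _ _ h.1 h.2, ?_, ?_, ?_, ?_⟩
  · intro x
    unfold Ident
    tauto
  · intro x y hx hy
    right
    rintro (⟨_, h⟩ | ⟨_, h⟩)
    · exact asym _ _ hy h
    · exact asym _ _ hx h
  · intro x y hx hy
    right
    rintro (⟨h, _⟩ | ⟨h, _⟩)
    · exact asym _ _ hx h
    · exact asym _ _ hy h
  · rintro x y hx hy (h | h)
    · exact h.1 (A2 _ _ _ hx hy)
    · exact h (Or.inl ⟨hx, hy⟩)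
end

section
/- Uniqueness of cut sound: let P, Q ⊆ S be nonempty and disjoint with P ∪ Q = S and suppose ¬L q p for every p ∈ P and q ∈ Q. If θ₁ and θ₂ are both cut sounds of {P,Q} — i.e., for i = 1, 2, every x with L x θᵢ lies in P and every x with L θᵢ x lies in Q — then θ₁ ∼ θ₂. -/
theorem stmt_3 {S : Type*} (L : S → S → Prop)
    (A1 : ∀ x : S, ¬ L x x)
    (A2 : ∀ x y z : S, L x y → L y z → L x z)
    (A3 : ∃ x y : S, L x y)
    (A4 : ∀ x y z : S, L x y → ¬ (Ident L x z ∧ Ident L y z))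
    (A5a : ∀ x : S, ∃ a b : S, L a x ∧ L x b)
    (A5b : ∀ x y : S, L x y → ∃ a : S, L x a ∧ L a y)
    (P Q : Set S) (hP : P.Nonempty) (hQ : Q.Nonempty)
    (hdisj : Disjoint P Q) (hunion : P ∪ Q = Set.univ)
    (horder : ∀ p ∈ P, ∀ q ∈ Q, ¬ L q p)
    (θ₁ θ₂ : S)
    (h₁ : (∀ x : S, L x θ₁ → x ∈ P) ∧ (∀ x : S, L θ₁ x → x ∈ Q))
    (h₂ : (∀ x : S, L x θ₂ → x ∈ P) ∧ (∀ x : S, L θ₂ x → x ∈ Q)) :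
    Ident L θ₁ θ₂ := by
  refine ⟨fun h => ?_, fun h => ?_⟩
  · obtain ⟨a, ha, hb⟩ := A5b _ _ h
    exact Set.disjoint_left.mp hdisj (h₂.1 a hb) (h₁.2 a ha)
  · obtain ⟨a, ha, hb⟩ := A5b _ _ h
    exact Set.disjoint_left.mp hdisj (h₁.1 a hb) (h₂.2 a ha)
end

section
/- Symmetry of Congruence: for all sounds a, b, c, d, if C a b c d then C c d a b. -/
theorem stmt_4 {S : Type*} (L : S → S → Prop) (C : S → S → S → S → Prop)
    (A1 : ∀ x : S, ¬ L x x)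
    (A2 : ∀ x y z : S, L x y → L y z → L x z)
    (A3 : ∃ x y : S, L x y)
    (A4 : ∀ x y z : S, L x y → ¬ (Ident L x z ∧ Ident L y z))
    (A5a : ∀ x : S, ∃ a b : S, L a x ∧ L x b)
    (A5b : ∀ x y : S, L x y → ∃ a : S, L x a ∧ L a y)
    (C1 : ∀ a a' b b' : S, Ident L a a' → Ident L b b' → C a b a' b')
    (C2 : ∀ a b c d e f : S, C a b c d → C c d e f → C a b e f)
    (C3 : ∀ x y a : S, ∃ b : S, C x y a b ∧ ∀ b' : S, C x y a b' → Ident L b b')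
    (C4a : ∀ a b c d : S, L a b → C a b c d → L c d)
    (C4b : ∀ a b c d : S, L a b → (C a b c d ↔ C b a d c))
    (C5a : ∀ a b c a' b' c' : S, L a b → L b c → C a b a' b' → C b c b' c' → C a c a' c')
    (C5b : ∀ a b c a' b' c' : S, L a b → L b c → C a b b' a' → C b c c' b' → C a c c' a') :
    ∀ a b c d : S, C a b c d → C c d a b := by
  intro a b c d h
  obtain ⟨b', hb', -⟩ := C3 c d a
  obtain ⟨b0, -, hu⟩ := C3 a b a
  have ra : Ident L a a := ⟨A1 a, A1 a⟩
  have h1 := hu b (C1 a a b b ra ⟨A1 b, A1 b⟩)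
  have h2 := hu b' (C2 _ _ _ _ _ _ h hb')
  have h3 : Ident L b' b :=
    ⟨fun hl => A4 _ _ b0 hl ⟨⟨h2.2, h2.1⟩, ⟨h1.2, h1.1⟩⟩,
     fun hl => A4 _ _ b0 hl ⟨⟨h1.2, h1.1⟩, ⟨h2.2, h2.1⟩⟩⟩
  exact C2 _ _ _ _ _ _ hb' (C1 _ _ _ _ ra h3)
end

section
/- If C a b c d, then a ∼ c if and only if b ∼ d. -/
theorem stmt_5 {S : Type*} (L : S → S → Prop) (C : S → S → S → S → Prop)
    (A1 : ∀ x : S, ¬ L x x)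
    (A2 : ∀ x y z : S, L x y → L y z → L x z)
    (A3 : ∃ x y : S, L x y)
    (A4 : ∀ x y z : S, L x y → ¬ (Ident L x z ∧ Ident L y z))
    (A5a : ∀ x : S, ∃ a b : S, L a x ∧ L x b)
    (A5b : ∀ x y : S, L x y → ∃ a : S, L x a ∧ L a y)
    (C1 : ∀ a a' b b' : S, Ident L a a' → Ident L b b' → C a b a' b')
    (C2 : ∀ a b c d e f : S, C a b c d → C c d e f → C a b e f)
    (C3 : ∀ x y a : S, ∃ b : S, C x y a b ∧ ∀ b' : S, C x y a b' → Ident L b b')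
    (C4a : ∀ a b c d : S, L a b → C a b c d → L c d)
    (C4b : ∀ a b c d : S, L a b → (C a b c d ↔ C b a d c))
    (C5a : ∀ a b c a' b' c' : S, L a b → L b c → C a b a' b' → C b c b' c' → C a c a' c')
    (C5b : ∀ a b c a' b' c' : S, L a b → L b c → C a b b' a' → C b c c' b' → C a c c' a') :
    ∀ a b c d : S, C a b c d → (Ident L a c ↔ Ident L b d) := by
  have irefl : ∀ x, Ident L x x := fun x => ⟨A1 x, A1 x⟩
  have isymm : ∀ x y, Ident L x y → Ident L y x := fun x y h => ⟨h.2, h.1⟩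
  have itrans : ∀ x y z, Ident L x y → Ident L y z → Ident L x z := fun x y z h1 h2 =>
    ⟨fun h => A4 x z y h ⟨h1, isymm _ _ h2⟩, fun h => A4 z x y h ⟨isymm _ _ h2, h1⟩⟩
  have uniq : ∀ x y a b b', C x y a b → C x y a b' → Ident L b b' := by
    intro x y a b b' h h'
    obtain ⟨e, _, he⟩ := C3 x y a
    exact itrans _ _ _ (isymm _ _ (he b h)) (he b' h')
  intro a b c d h
  constructor
  · intro hac
    exact uniq a b c b d (C1 _ _ _ _ hac (irefl b)) h
  · intro hbd
    by_cases hab : L a b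
    · exact uniq b a d a c (C1 _ _ _ _ hbd (irefl a)) ((C4b a b c d hab).1 h)
    by_cases hba : L b a
    · have key : C b a d a := C1 _ _ _ _ hbd (irefl a)
      have hda : L d a := C4a _ _ _ _ hba key
      exact uniq b a d a c key ((C4b b a d c hba).2 h)
    have hi : Ident L a b := ⟨hab, hba⟩
    -- `[c,d]` is congruent to `[a,a]`
    have hcd : C c d a a := by
      obtain ⟨e, he, _⟩ := C3 c d a
      have h1 : C a b a e := C2 _ _ _ _ _ _ h he
      have h2 : Ident L b e := uniq a b a b e (C1 _ _ _ _ (irefl a) (irefl b)) h1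
      exact C2 _ _ _ _ _ _ he (C1 _ _ _ _ (irefl a) (itrans _ _ _ (isymm _ _ h2) (isymm _ _ hi)))
    have hdc : Ident L d c := by
      refine ⟨fun hl => ?_, fun hl => A1 a (C4a _ _ _ _ hl hcd)⟩
      exact A1 a (C4a _ _ _ _ hl ((C4b d c a a hl).2 hcd))
    exact itrans _ _ _ hi (itrans _ _ _ hbd hdc)
end

section
/- For all sounds a, b, a', b': C a b a' b' if and only if C a a' b b'. -/
theorem stmt_6 {S : Type*} (L : S → S → Prop) (C : S → S → S → S → Prop)
    (A1 : ∀ x : S, ¬ L x x)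
    (A2 : ∀ x y z : S, L x y → L y z → L x z)
    (A3 : ∃ x y : S, L x y)
    (A4 : ∀ x y z : S, L x y → ¬ (Ident L x z ∧ Ident L y z))
    (A5a : ∀ x : S, ∃ a b : S, L a x ∧ L x b)
    (A5b : ∀ x y : S, L x y → ∃ a : S, L x a ∧ L a y)
    (C1 : ∀ a a' b b' : S, Ident L a a' → Ident L b b' → C a b a' b')
    (C2 : ∀ a b c d e f : S, C a b c d → C c d e f → C a b e f)
    (C3 : ∀ x y a : S, ∃ b : S, C x y a b ∧ ∀ b' : S, C x y a b' → Ident L b b')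
    (C4a : ∀ a b c d : S, L a b → C a b c d → L c d)
    (C4b : ∀ a b c d : S, L a b → (C a b c d ↔ C b a d c))
    (C5a : ∀ a b c a' b' c' : S, L a b → L b c → C a b a' b' → C b c b' c' → C a c a' c')
    (C5b : ∀ a b c a' b' c' : S, L a b → L b c → C a b b' a' → C b c c' b' → C a c c' a') :
    ∀ a b a' b' : S, C a b a' b' ↔ C a a' b b' := by
  have ir : ∀ x, Ident L x x := fun x => ⟨A1 x, A1 x⟩
  have is : ∀ x y, Ident L x y → Ident L y x := fun x y h => ⟨h.2, h.1⟩
  have it : ∀ x y z, Ident L x y → Ident L y z → Ident L x z := fun x y z h k =>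
    ⟨fun l => A4 x z y l ⟨h, is _ _ k⟩, fun l => A4 z x y l ⟨is _ _ k, h⟩⟩
  have uniq : ∀ x y a b b', C x y a b → C x y a b' → Ident L b b' := by
    intro x y a b b' h h'
    obtain ⟨e, -, he⟩ := C3 x y a
    exact it _ _ _ (is _ _ (he b h)) (he b' h')
  have rf : ∀ a b, C a b a b := fun a b => C1 _ _ _ _ (ir a) (ir b)
  -- replace the last endpoint by an identical-pitched one
  have repl : ∀ x y a b b', C x y a b → Ident L b b' → C x y a b' :=
    fun x y a b b' h k => C2 _ _ _ _ _ _ h (C1 _ _ _ _ (ir a) k)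
  have sy : ∀ a b c d, C a b c d → C c d a b := by
    intro a b c d h
    obtain ⟨e, he, -⟩ := C3 c d a
    exact repl _ _ _ _ _ he (uniq _ _ _ _ _ (C2 _ _ _ _ _ _ h he) (rf a b))
  have nul : ∀ a b c d, Ident L a b → C a b c d → Ident L c d := by
    intro a b c d k h
    refine ⟨fun l => k.1 (C4a _ _ _ _ l (sy _ _ _ _ h)), fun l => k.2 ?_⟩
    exact C4a _ _ _ _ l ((C4b d c b a l).2 (sy _ _ _ _ h))
  have nulC : ∀ a b c d, Ident L a b → Ident L c d → C a b c d := by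
    intro a b c d h k
    obtain ⟨x, hx, -⟩ := C3 a b c
    exact repl _ _ _ _ _ hx (it _ _ _ (is _ _ (nul _ _ _ _ h hx)) k)
  have rev : ∀ a b c d, C a b c d → C b a d c := by
    intro a b c d h
    by_cases l : L a b
    · exact (C4b _ _ _ _ l).1 h
    by_cases l' : L b a
    · exact (C4b _ _ _ _ l').2 h
    · exact nulC _ _ _ _ ⟨l', l⟩ (is _ _ (nul _ _ _ _ ⟨l, l'⟩ h))
  have pp : ∀ a b a' b', L a b → L a a' → C a b a' b' → C a a' b b' := by
    intro a b a' b' l l' h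
    obtain ⟨x, hx, -⟩ := C3 a a' b
    have lx := C4a _ _ _ _ l' hx
    have := C5b a b x b' a' a l lx h (sy _ _ _ _ hx)
    exact repl _ _ _ _ _ hx (uniq _ _ _ _ _ (rf a x) this)
  have main : ∀ a b a' b', C a b a' b' → C a a' b b' := by
    intro a b a' b' h
    by_cases e : Ident L a b
    · exact C1 _ _ _ _ e (nul _ _ _ _ e h)
    by_cases e' : Ident L a a'
    · exact nulC _ _ _ _ e' (uniq _ _ _ _ _ (C1 _ _ _ _ e' (ir b)) h)
    by_cases l : L a b
    · by_cases l' : L a a'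
      · exact pp _ _ _ _ l l' h
      · have l'' : L a' a := by
          by_contra k
          exact e' ⟨l', k⟩
        exact rev _ _ _ _ (pp _ _ _ _ (C4a _ _ _ _ l h) l'' (sy _ _ _ _ h))
    · have lb : L b a := by
        by_contra k
        exact e ⟨l, k⟩
      obtain ⟨x, hx, -⟩ := C3 a a' b
      by_cases l' : L a a'
      · have := pp _ _ _ _ (C4a _ _ _ _ l' hx) lb (sy _ _ _ _ hx)
        exact repl _ _ _ _ _ hx (uniq _ _ _ _ _ (rev _ _ _ _ this) h)
      · have l'' : L a' a := by
          by_contra k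
          exact e' ⟨l', k⟩
        have hx' := rev _ _ _ _ hx
        have lx := C4a _ _ _ _ l'' hx'
        have := C5b x b a a a' b' lx lb (sy _ _ _ _ hx') (rev _ _ _ _ h)
        exact repl _ _ _ _ _ hx (uniq _ _ _ _ _ (rf a x) (rev _ _ _ _ this))
  exact fun a b a' b' => ⟨main a b a' b', main a a' b b'⟩
end

section
/- Interval Ordering: define, for sounds with L a b and L c d, '[a,b] < [c,d]' to mean that there exists x with C a b c x and L x d. Then for all a, b, c, d, e, f with L a b, L c d, and L e f: (1) exactly one of '[a,b] < [c,d]', 'C a b c d', '[c,d] < [a,b]' holds; (2) if [a,b] < [c,d] and C c d e f then [a,b] < [e,f]; (3) if [c,d] < [a,b] and C c d e f then [e,f] < [a,b]; (4) if [a,b] < [c,d] and [c,d] < [e,f] then [a,b] < [e,f]. -/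
/-- For intervals greater than unit: `[a,b] < [c,d]` iff there is `x` lower-pitched
than `d` with `[a,b] ≅ [c,x]`. -/
def ILt {S : Type*} (L : S → S → Prop) (C : S → S → S → S → Prop) (a b c d : S) : Prop :=
  ∃ x : S, C a b c x ∧ L x d

theorem stmt_7 {S : Type*} (L : S → S → Prop) (C : S → S → S → S → Prop)
    (A1 : ∀ x : S, ¬ L x x)
    (A2 : ∀ x y z : S, L x y → L y z → L x z)
    (A3 : ∃ x y : S, L x y)
    (A4 : ∀ x y z : S, L x y → ¬ (Ident L x z ∧ Ident L y z))
    (A5a : ∀ x : S, ∃ a b : S, L a x ∧ L x b)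
    (A5b : ∀ x y : S, L x y → ∃ a : S, L x a ∧ L a y)
    (C1 : ∀ a a' b b' : S, Ident L a a' → Ident L b b' → C a b a' b')
    (C2 : ∀ a b c d e f : S, C a b c d → C c d e f → C a b e f)
    (C3 : ∀ x y a : S, ∃ b : S, C x y a b ∧ ∀ b' : S, C x y a b' → Ident L b b')
    (C4a : ∀ a b c d : S, L a b → C a b c d → L c d)
    (C4b : ∀ a b c d : S, L a b → (C a b c d ↔ C b a d c))
    (C5a : ∀ a b c a' b' c' : S, L a b → L b c → C a b a' b' → C b c b' c' → C a c a' c')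
    (C5b : ∀ a b c a' b' c' : S, L a b → L b c → C a b b' a' → C b c c' b' → C a c c' a') :
    ∀ a b c d e f : S, L a b → L c d → L e f →
      ((ILt L C a b c d ∨ C a b c d ∨ ILt L C c d a b) ∧
        ¬ (ILt L C a b c d ∧ C a b c d) ∧
        ¬ (ILt L C a b c d ∧ ILt L C c d a b) ∧
        ¬ (C a b c d ∧ ILt L C c d a b)) ∧
      (ILt L C a b c d → C c d e f → ILt L C a b e f) ∧
      (ILt L C c d a b → C c d e f → ILt L C e f a b) ∧
      (ILt L C a b c d → ILt L C c d e f → ILt L C a b e f) := by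
  have idr : ∀ x, Ident L x x := fun x => ⟨A1 x, A1 x⟩
  have ids : ∀ x y, Ident L x y → Ident L y x := fun x y h => ⟨h.2, h.1⟩
  have sub : ∀ x y z, L x y → Ident L y z → L x z := by
    intro x y z h hi
    by_contra hn
    exact A4 x y z h ⟨⟨hn, fun h' => hi.2 (A2 _ _ _ h' h)⟩, hi⟩
  have uniq : ∀ x y a b b', C x y a b → C x y a b' → Ident L b b' := by
    intro x y a b b' h h'
    obtain ⟨z, -, hz⟩ := C3 x y a
    have h1 := ids _ _ (hz b h)
    have h2 := ids _ _ (hz b' h')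
    exact ⟨fun hl => A4 _ _ z hl ⟨h1, h2⟩, fun hl => A4 _ _ z hl ⟨h2, h1⟩⟩
  have symm : ∀ a b c d, C a b c d → C c d a b := by
    intro a b c d h
    obtain ⟨b1, h1, -⟩ := C3 c d a
    have h2 := uniq a b a b1 b (C2 _ _ _ _ _ _ h h1) (C1 _ _ _ _ (idr a) (idr b))
    exact C2 _ _ _ _ _ _ h1 (C1 _ _ _ _ (idr a) h2)
  have mono : ∀ a x b c y d, L a x → L x b → C a b c d → C a x c y → L y d := by
    intro a x b c y d hax hxb h1 h2
    obtain ⟨d', h3, -⟩ := C3 x b y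
    have h4 := C5a _ _ _ _ _ _ hax hxb h2 h3
    exact sub _ _ _ (C4a _ _ _ _ hxb h3) (uniq _ _ _ _ _ h4 h1)
  intro a b c d e f hab hcd hef
  refine ⟨⟨?_, ?_, ?_, ?_⟩, ?_, ?_, ?_⟩
  · obtain ⟨x, hx, -⟩ := C3 a b c
    by_cases h1 : L x d
    · exact Or.inl ⟨x, hx, h1⟩
    by_cases h2 : L d x
    · obtain ⟨y, hy, -⟩ := C3 c d a
      exact Or.inr (Or.inr ⟨y, hy, mono _ _ _ _ _ _ hcd h2 (symm _ _ _ _ hx) hy⟩)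
    · exact Or.inr (Or.inl (C2 _ _ _ _ _ _ hx (C1 _ _ _ _ (idr c) ⟨h1, h2⟩)))
  · rintro ⟨⟨x, hx, hl⟩, h⟩
    exact (uniq _ _ _ _ _ hx h).1 hl
  · rintro ⟨⟨x, hx, hl⟩, ⟨y, hy, hl'⟩⟩
    have := mono _ _ _ _ _ _ (C4a _ _ _ _ hab hx) hl hy (symm _ _ _ _ hx)
    exact A1 _ (A2 _ _ _ this hl')
  · rintro ⟨h, ⟨x, hx, hl⟩⟩
    exact (uniq _ _ _ _ _ hx (symm _ _ _ _ h)).1 hl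
  · rintro ⟨x, hx, hl⟩ h
    obtain ⟨y, hy, -⟩ := C3 c x e
    exact ⟨y, C2 _ _ _ _ _ _ hx hy, mono _ _ _ _ _ _ (C4a _ _ _ _ hab hx) hl h hy⟩
  · rintro ⟨x, hx, hl⟩ h
    exact ⟨x, C2 _ _ _ _ _ _ (symm _ _ _ _ h) hx, hl⟩
  · rintro ⟨x, hx, hl⟩ ⟨y, hy, hl'⟩
    obtain ⟨z, hz, -⟩ := C3 c x e
    exact ⟨z, C2 _ _ _ _ _ _ hx hz,
      A2 _ _ _ (mono _ _ _ _ _ _ (C4a _ _ _ _ hab hx) hl hy hz) hl'⟩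
end

section
/- Uniqueness of midsound: if m and m' are both midsounds of the interval [a,b] — that is, C a m m b and C a m' m' b — then m ∼ m'. -/
theorem stmt_8 {S : Type*} (L : S → S → Prop) (C : S → S → S → S → Prop)
    (A1 : ∀ x : S, ¬ L x x)
    (A2 : ∀ x y z : S, L x y → L y z → L x z)
    (A3 : ∃ x y : S, L x y)
    (A4 : ∀ x y z : S, L x y → ¬ (Ident L x z ∧ Ident L y z))
    (A5a : ∀ x : S, ∃ a b : S, L a x ∧ L x b)
    (A5b : ∀ x y : S, L x y → ∃ a : S, L x a ∧ L a y)
    (C1 : ∀ a a' b b' : S, Ident L a a' → Ident L b b' → C a b a' b')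
    (C2 : ∀ a b c d e f : S, C a b c d → C c d e f → C a b e f)
    (C3 : ∀ x y a : S, ∃ b : S, C x y a b ∧ ∀ b' : S, C x y a b' → Ident L b b')
    (C4a : ∀ a b c d : S, L a b → C a b c d → L c d)
    (C4b : ∀ a b c d : S, L a b → (C a b c d ↔ C b a d c))
    (C5a : ∀ a b c a' b' c' : S, L a b → L b c → C a b a' b' → C b c b' c' → C a c a' c')
    (C5b : ∀ a b c a' b' c' : S, L a b → L b c → C a b b' a' → C b c c' b' → C a c c' a') :
    ∀ a b m m' : S, C a m m b → C a m' m' b → Ident L m m' := by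
  have isymm : ∀ x y, Ident L x y → Ident L y x := fun x y h => ⟨h.2, h.1⟩
  have irefl : ∀ x, Ident L x x := fun x => ⟨A1 x, A1 x⟩
  have itrans : ∀ x y z, Ident L x y → Ident L y z → Ident L x z := fun x y z h k =>
    ⟨fun l => A4 x z y l ⟨h, isymm _ _ k⟩, fun l => A4 z x y l ⟨isymm _ _ k, h⟩⟩
  have uniq : ∀ x y a b b', C x y a b → C x y a b' → Ident L b b' := by
    intro x y a b b' h h'
    obtain ⟨e, _, he⟩ := C3 x y a
    exact itrans _ _ _ (isymm _ _ (he b h)) (he b' h')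
  have csymm : ∀ a b c d, C a b c d → C c d a b := by
    intro a b c d h
    obtain ⟨e, he, _⟩ := C3 c d a
    have h1 := C2 _ _ _ _ _ _ h he
    have h2 := uniq _ _ _ _ _ h1 (C1 a a b b (irefl a) (irefl b))
    exact C2 _ _ _ _ _ _ he (C1 a a e b (irefl a) h2)
  have down : ∀ a b c d, L b a → C a b c d → L d c := fun a b c d l h =>
    C4a b a d c l ((C4b b a d c l).2 h)
  have eqv : ∀ a b c d, Ident L a b → C a b c d → Ident L c d := fun a b c d l h =>
    ⟨fun k => l.1 (C4a _ _ _ _ k (csymm _ _ _ _ h)),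
      fun k => l.2 (down _ _ _ _ k (csymm _ _ _ _ h))⟩
  have core : ∀ a b m m', L m m' → L m' b → C m' b a m' → C m b a m → False := by
    intro a b m m' l1 l2 h1 h2
    obtain ⟨q, hq, _⟩ := C3 m m' m'
    have h3 := C5b m m' b q m' a l1 l2 hq h1
    exact (uniq _ _ _ _ _ h2 h3).1 (A2 _ _ _ l1 (C4a _ _ _ _ l1 hq))
  -- direction of both halves of a bisected interval
  have main : ∀ a b m m', C a m m b → C a m' m' b → ¬ L m m' := by
    intro a b m m' h h' l
    by_cases l1 : L a m
    · have l2 := A2 _ _ _ l1 l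
      exact core a b m m' l (C4a _ _ _ _ l2 h') (csymm _ _ _ _ h') (csymm _ _ _ _ h)
    · by_cases l2 : L m a
      · have l3 := down _ _ _ _ l2 h
        have l4 := A2 _ _ _ l3 l2
        by_cases l5 : L m' a
        · exact core b a m m' l l5 ((C4b _ _ _ _ l5).2 h') ((C4b _ _ _ _ l2).2 h)
        · by_cases l6 : L a m'
          · exact A1 _ (A2 _ _ _ l4 (A2 _ _ _ l6 (C4a _ _ _ _ l6 h')))
          · exact (itrans _ _ _ ⟨l6, l5⟩ (eqv _ _ _ _ ⟨l6, l5⟩ h')).2 l4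
      · have i1 : Ident L a m := ⟨l1, l2⟩
        have i2 := itrans _ _ _ i1 (eqv _ _ _ _ i1 h)
        by_cases l5 : L m' a
        · exact i2.2 (A2 _ _ _ (down _ _ _ _ l5 h') l5)
        · by_cases l6 : L a m'
          · exact i2.1 (A2 _ _ _ l6 (C4a _ _ _ _ l6 h'))
          · exact (itrans _ _ _ (isymm _ _ i1) ⟨l6, l5⟩).1 l
  exact fun a b m m' h h' => ⟨main a b m m' h h', main a b m' m h' h⟩
end

section
/- Existence of Midsound: for all sounds a, b there exists a sound m with C a m m b. -/
theorem mid_core {X : Type*} [LinearOrder X] (C : X → X → X → X → Prop)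
    (dense : ∀ x y : X, x < y → ∃ z, x < z ∧ z < y)
    (refl : ∀ a b, C a b a b)
    (trans : ∀ a b c d e f : X, C a b c d → C c d e f → C a b e f)
    (ex : ∀ x y a : X, ∃ b : X, C x y a b)
    (uniq : ∀ x y a b b' : X, C x y a b → C x y a b' → b = b')
    (pos : ∀ a b c d : X, a < b → C a b c d → c < d)
    (rev : ∀ a b c d : X, a < b → (C a b c d ↔ C b a d c))
    (add : ∀ a b c a' b' c' : X, a < b → b < c → C a b a' b' → C b c b' c' → C a c a' c')
    (comm : ∀ a b c a' b' c' : X, a < b → b < c → C a b b' a' → C b c c' b' → C a c c' a')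
    (D : ∀ P : Set X, P.Nonempty → (∃ x, x ∉ P) → (∀ p ∈ P, ∀ q, q < p → q ∈ P) →
      ∃ θ : X, (∀ x, x < θ → x ∈ P) ∧ (∀ x, θ < x → x ∉ P))
    (a b : X) (hab : a < b) : ∃ m, a < m ∧ C a m m b := by
  have symm : ∀ a b c d, C a b c d → C c d a b := by
    intro a b c d h
    obtain ⟨b', hb'⟩ := ex c d a
    have := uniq _ _ _ _ _ (trans _ _ _ _ _ _ h hb') (refl a b)
    exact this ▸ hb'
  have exl : ∀ a b d, a < b → ∃ c, C a b c d := by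
    intro a b d h
    obtain ⟨c, hc⟩ := ex b a d
    exact ⟨c, (rev _ _ _ _ h).2 hc⟩
  have uniql : ∀ a b c c' d, a < b → C a b c d → C a b c' d → c = c' := by
    intro a b c c' d h h1 h2
    exact uniq _ _ _ _ _ ((rev _ _ _ _ h).1 h1) ((rev _ _ _ _ h).1 h2)
  have swap : ∀ a b c d, a < b → C a b c d → a < c → C a c b d := by
    intro a b c d hab h hac
    obtain ⟨e, he⟩ := ex a c b
    have hbe := pos _ _ _ _ hac he
    have h1 := comm a b e d c a hab hbe h (symm _ _ _ _ he)
    have := uniq _ _ _ _ _ (refl a e) h1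
    exact this ▸ he
  have mono : ∀ a b c d, a < b → C a b c d → a < c → b < d := by
    intro a b c d hab h hac
    exact pos _ _ _ _ hac (swap _ _ _ _ hab h hac)
  have ext : ∀ a q p c z y, a < q → q < p → C a q c z → C a p c y → z < y := by
    intro a q p c z y h1 h2 h3 h4
    obtain ⟨w, hw⟩ := ex q p z
    have := uniq _ _ _ _ _ h4 (add _ _ _ _ _ _ h1 h2 h3 hw)
    exact this ▸ pos _ _ _ _ h2 hw
  have null : ∀ a c d, C a a c d → d = c := by
    intro a c d h
    rcases lt_trichotomy c d with h1 | h1 | h1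
    · exact absurd (pos _ _ _ _ h1 (symm _ _ _ _ h)) (lt_irrefl _)
    · exact h1.symm
    · exact absurd (pos _ _ _ _ h1 ((rev _ _ _ _ h1).2 (symm _ _ _ _ h))) (lt_irrefl _)
  have neg : ∀ a x c d, x < a → C a x c d → d < c := by
    intro a x c d h h1
    exact pos _ _ _ _ h ((rev _ _ _ _ h).2 h1)
  have fle : ∀ x y, x ≤ a → C a x x y → y < b := by
    intro x y hx h
    rcases hx.lt_or_eq with h1 | h1
    · exact ((neg _ _ _ _ h1 h).trans h1).trans hab
    · subst h1
      rw [null _ _ _ h]; exact hab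
  have fmono : ∀ q p y y', a < q → q < p → C a q q y → C a p p y' → y < y' := by
    intro q p y y' h1 h2 h3 h4
    obtain ⟨z, hz⟩ := ex a q p
    have hq := pos _ _ _ _ h1 h3
    have := mono _ _ _ _ hq (trans _ _ _ _ _ _ (symm _ _ _ _ h3) hz) h2
    exact this.trans (ext _ _ _ _ _ _ h1 h2 hz h4)
  have half : ∀ y b, y < b → ∃ z w, y < z ∧ z < w ∧ w ≤ b ∧ C y z z w := by
    intro y b hyb
    obtain ⟨z0, h1, h2⟩ := dense y b hyb
    obtain ⟨w, hw⟩ := ex y z0 z0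
    by_cases hwb : w ≤ b
    · exact ⟨z0, w, h1, pos _ _ _ _ h1 hw, hwb, hw⟩
    push Not at hwb
    obtain ⟨z, hz⟩ := ex z0 b y
    have hyz := pos _ _ _ _ h2 hz
    have hzz := ext _ _ _ _ _ _ h2 hwb hz (symm _ _ _ _ hw)
    obtain ⟨w', hw'⟩ := ex y z z
    have hzw := pos _ _ _ _ hyz hw'
    have := mono _ _ _ _ hzw (symm _ _ _ _ (trans _ _ _ _ _ _ hz hw')) hzz
    exact ⟨z, w', hyz, hzw, this.le, hw'⟩
  obtain ⟨θ, hθ1, hθ2⟩ := D {x | ∀ y, C a x x y → y ≤ b}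
    ⟨a, fun y h => (fle a y le_rfl h).le⟩
    (by
      obtain ⟨y, hy⟩ := ex a b b
      exact ⟨b, fun h => absurd (pos _ _ _ _ hab hy) (not_lt.2 (h y hy))⟩)
    (by
      intro p hp q hqp y hy
      rcases le_or_gt q a with h | h
      · exact (fle _ _ h hy).le
      · obtain ⟨y', hy'⟩ := ex a p p
        exact (fmono _ _ _ _ h hqp hy hy').le.trans (hp y' hy'))
  obtain ⟨y, hy⟩ := ex a θ θ
  have haθ : a ≤ θ := by
    by_contra h
    push Not at h
    exact hθ2 a h (fun y h => (fle a y le_rfl h).le)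
  rcases lt_trichotomy y b with hyb | hyb | hyb
  · exfalso
    obtain ⟨z, w, h1, h2, h3, h4⟩ := half y b hyb
    obtain ⟨x, hx⟩ := ex y z θ
    have hθx := pos _ _ _ _ h1 hx
    have key : C a x x w := by
      rcases haθ.lt_or_eq with h | h
      · have hθy := pos _ _ _ _ h hy
        have e1 : C θ x z w := trans _ _ _ _ _ _ (symm _ _ _ _ hx) h4
        have e2 := swap _ _ _ _ hθx e1 (hθy.trans h1)
        have e3 := add _ _ _ _ _ _ h hθx hy (symm _ _ _ _ hx)
        exact trans _ _ _ _ _ _ e3 e2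
      · subst h
        have := null _ _ _ hy
        subst this
        have := uniq _ _ _ _ _ hx (refl y z)
        subst this
        exact h4
    refine hθ2 x hθx ?_
    intro y' hy'
    rw [uniq _ _ _ _ _ hy' key]; exact h3
  · subst hyb
    rcases haθ.lt_or_eq with h | h
    · exact ⟨θ, h, hy⟩
    · subst h
      exact absurd (null _ _ _ hy) hab.ne'
  · exfalso
    have haθ' : a < θ := by
      by_contra h
      exact absurd (fle _ _ (not_lt.1 h) hy) hyb.not_gt
    have hθy := pos _ _ _ _ haθ' hy
    obtain ⟨b', hb1, hb2⟩ := dense _ _ (max_lt hyb hθy)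
    obtain ⟨hbb, hθb⟩ := max_lt_iff.1 hb1
    obtain ⟨z, w, h1, h2, h3, h4⟩ := half b' y hb2
    obtain ⟨x, hx⟩ := exl b' z θ h1
    have hxθ := pos _ _ _ _ h1 hx
    obtain ⟨v, hv⟩ := exl x θ y hxθ
    obtain ⟨u, hu⟩ := exl x θ v hxθ
    have huv := pos _ _ _ _ hxθ hu
    have hvy := pos _ _ _ _ hxθ hv
    have hx' := symm _ _ _ _ hx
    have hzv : z ≤ v := by
      by_contra h
      push Not at h
      have := mono _ _ _ _ hvy (trans _ _ _ _ _ _ (symm _ _ _ _ hv) (trans _ _ _ _ _ _ hx' h4)) h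
      exact absurd this (not_lt.2 h3)
    have hbu : b' ≤ u := by
      by_contra h
      push Not at h
      have := mono _ _ _ _ huv (trans _ _ _ _ _ _ (symm _ _ _ _ hu) hx') h
      exact absurd this (not_lt.2 hzv)
    have hθv : θ < v := hθb.trans (hbu.trans_lt huv)
    have hax : a < x := by
      rcases lt_trichotomy a x with h | h | h
      · exact h
      · subst h
        exact absurd (uniql _ _ _ _ _ haθ' hy hv) hθv.ne
      · exfalso
        obtain ⟨v', hv'⟩ := ex x a v
        obtain ⟨t, ht⟩ := ex a θ v'
        have e := uniq _ _ _ _ _ hv (add _ _ _ _ _ _ h haθ' hv' ht)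
        subst e
        have e2 := uniql _ _ _ _ _ haθ' hy ht
        have := pos _ _ _ _ h hv'
        exact absurd (hθv.trans this) (e2 ▸ lt_irrefl _)
    have e1 := swap _ _ _ _ hxθ hu (hxθ.trans (hθb.trans_le hbu))
    have e2 : C a x θ v := by
      obtain ⟨v0, hv0⟩ := ex a x θ
      obtain ⟨t, ht⟩ := ex x θ v0
      have e := uniq _ _ _ _ _ hy (add _ _ _ _ _ _ hax hxθ hv0 ht)
      subst e
      exact uniql _ _ _ _ _ hxθ ht hv ▸ hv0
    have := hθ1 x hxθ u (trans _ _ _ _ _ _ e2 (symm _ _ _ _ e1))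
    exact absurd (hbb.trans_le hbu) (not_lt.2 this)

theorem stmt_9 {S : Type*} (L : S → S → Prop) (C : S → S → S → S → Prop)
    (A1 : ∀ x : S, ¬ L x x)
    (A2 : ∀ x y z : S, L x y → L y z → L x z)
    (A3 : ∃ x y : S, L x y)
    (A4 : ∀ x y z : S, L x y → ¬ (Ident L x z ∧ Ident L y z))
    (A5a : ∀ x : S, ∃ a b : S, L a x ∧ L x b)
    (A5b : ∀ x y : S, L x y → ∃ a : S, L x a ∧ L a y)
    (C1 : ∀ a a' b b' : S, Ident L a a' → Ident L b b' → C a b a' b')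
    (C2 : ∀ a b c d e f : S, C a b c d → C c d e f → C a b e f)
    (C3 : ∀ x y a : S, ∃ b : S, C x y a b ∧ ∀ b' : S, C x y a b' → Ident L b b')
    (C4a : ∀ a b c d : S, L a b → C a b c d → L c d)
    (C4b : ∀ a b c d : S, L a b → (C a b c d ↔ C b a d c))
    (C5a : ∀ a b c a' b' c' : S, L a b → L b c → C a b a' b' → C b c b' c' → C a c a' c')
    (C5b : ∀ a b c a' b' c' : S, L a b → L b c → C a b b' a' → C b c c' b' → C a c c' a')
    (D : ∀ P Q : Set S, P.Nonempty → Q.Nonempty → Disjoint P Q → P ∪ Q = Set.univ →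
      (∀ p ∈ P, ∀ q ∈ Q, ¬ L q p) →
      ∃ θ : S, (∀ x : S, L x θ → x ∈ P) ∧ (∀ x : S, L θ x → x ∈ Q)) :
    ∀ a b : S, ∃ m : S, C a m m b := by
  classical
  have irr : ∀ x, Ident L x x := fun x => ⟨A1 x, A1 x⟩
  have isymm : ∀ x y, Ident L x y → Ident L y x := fun x y h => ⟨h.2, h.1⟩
  have wk : ∀ x y z, L x z → L x y ∨ L y z := by
    intro x y z h
    by_contra hn
    push Not at hn
    refine A4 x z y h ⟨⟨hn.1, fun h1 => hn.2 (A2 _ _ _ h1 h)⟩, ⟨fun h1 => hn.1 (A2 _ _ _ h h1), hn.2⟩⟩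
  letI : Preorder S :=
    { le := fun x y => ¬ L y x
      lt := fun x y => L x y
      le_refl := A1
      le_trans := fun x y z h1 h2 h3 => (wk z y x h3).elim h2 h1
      lt_iff_le_not_ge := fun x y =>
        ⟨fun h => ⟨fun h1 => A1 _ (A2 _ _ _ h h1), fun h1 => h1 h⟩, fun h => not_not.1 h.2⟩ }
  haveI : Std.Total (α := S) (· ≤ ·) :=
    ⟨fun x y => by
      by_contra hn
      push Not at hn
      have h1 : L y x := not_not.1 hn.1
      have h2 : L x y := not_not.1 hn.2
      exact A1 _ (A2 _ _ _ h1 h2)⟩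
  let X := Antisymmetrization S (· ≤ ·)
  let mk : S → X := toAntisymmetrization (· ≤ ·)
  let out : X → S := ofAntisymmetrization (· ≤ ·)
  have lt_iff : ∀ x y : X, x < y ↔ L (out x) (out y) := fun x y =>
    ofAntisymmetrization_lt_ofAntisymmetrization_iff.symm
  have mk_lt : ∀ x y : S, mk x < mk y ↔ L x y := fun x y =>
    toAntisymmetrization_lt_toAntisymmetrization_iff
  have mk_out : ∀ x : X, mk (out x) = x := fun x => toAntisymmetrization_ofAntisymmetrization _ x
  have eq_of : ∀ x y : S, Ident L x y → mk x = mk y := by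
    intro x y h
    apply le_antisymm
    · exact not_lt.1 (fun h1 => h.2 ((mk_lt _ _).1 h1))
    · exact not_lt.1 (fun h1 => h.1 ((mk_lt _ _).1 h1))
  have out_mk : ∀ x : S, Ident L (out (mk x)) x := by
    intro x
    constructor
    · rw [← mk_lt, mk_out]; exact lt_irrefl _
    · rw [← mk_lt, mk_out]; exact lt_irrefl _
  have Csymm : ∀ a b c d, C a b c d → C c d a b := by
    intro a b c d h
    obtain ⟨b', hb', hu⟩ := C3 c d a
    obtain ⟨b'', h1, hu'⟩ := C3 a b a
    have i1 := hu' b (C1 _ _ _ _ (irr _) (irr _))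
    have i2 := hu' b' (C2 _ _ _ _ _ _ h hb')
    have i3 : Ident L b' b := by
      have := (eq_of _ _ i2).symm.trans (eq_of _ _ i1)
      constructor
      · rw [← mk_lt, this]; exact lt_irrefl _
      · rw [← mk_lt, this]; exact lt_irrefl _
    exact C2 _ _ _ _ _ _ hb' (C1 _ _ _ _ (irr _) i3)
  have main : ∀ a b, L a b → ∃ m, L a m ∧ C a m m b := by
    intro a b hab
    obtain ⟨m, h1, h2⟩ := mid_core (X := X)
      (fun p q r s => C (out p) (out q) (out r) (out s))
      (by
        intro x y h
        obtain ⟨z, h1, h2⟩ := A5b _ _ ((lt_iff _ _).1 h)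
        refine ⟨mk z, ?_, ?_⟩
        · rw [← mk_out x]; exact (mk_lt _ _).2 h1
        · rw [← mk_out y]; exact (mk_lt _ _).2 h2)
      (fun a b => C1 _ _ _ _ (irr _) (irr _))
      (fun a b c d e f => C2 _ _ _ _ _ _)
      (by
        intro x y a
        obtain ⟨b, hb, -⟩ := C3 (out x) (out y) (out a)
        exact ⟨mk b, C2 _ _ _ _ _ _ hb (C1 _ _ _ _ (irr _) (isymm _ _ (out_mk b)))⟩)
      (by
        intro x y a b b' h1 h2
        obtain ⟨c, -, hc⟩ := C3 (out x) (out y) (out a)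
        rw [← mk_out b, ← mk_out b', ← eq_of _ _ (hc _ h1), ← eq_of _ _ (hc _ h2)])
      (fun a b c d h h1 => (lt_iff _ _).2 (C4a _ _ _ _ ((lt_iff _ _).1 h) h1))
      (fun a b c d h => C4b _ _ _ _ ((lt_iff _ _).1 h))
      (fun a b c a' b' c' h h1 => C5a _ _ _ _ _ _ ((lt_iff _ _).1 h) ((lt_iff _ _).1 h1))
      (fun a b c a' b' c' h h1 => C5b _ _ _ _ _ _ ((lt_iff _ _).1 h) ((lt_iff _ _).1 h1))
      (by
        rintro P ⟨p, hp⟩ ⟨q, hq⟩ hd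
        obtain ⟨θ, h1, h2⟩ := D (mk ⁻¹' P) (mk ⁻¹' P)ᶜ
          ⟨out p, by rw [Set.mem_preimage, mk_out]; exact hp⟩
          ⟨out q, by rw [Set.mem_compl_iff, Set.mem_preimage, mk_out]; exact hq⟩
          disjoint_compl_right (Set.union_compl_self _)
          (fun p hp q hq h => hq (hd _ hp _ ((mk_lt _ _).2 h)))
        refine ⟨mk θ, ?_, ?_⟩
        · intro x hx
          rw [← mk_out x] at hx ⊢
          exact h1 _ ((mk_lt _ _).1 hx)
        · intro x hx
          rw [← mk_out x] at hx ⊢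
          exact h2 _ ((mk_lt _ _).1 hx))
      (mk a) (mk b) ((mk_lt _ _).2 hab)
    refine ⟨out m, ?_, ?_⟩
    · rw [← mk_out m] at h1; exact (mk_lt _ _).1 h1
    · exact C2 _ _ _ _ _ _ (C1 _ _ _ _ (isymm _ _ (out_mk a)) (irr _))
        (C2 _ _ _ _ _ _ h2 (C1 _ _ _ _ (irr _) (out_mk b)))
  intro a b
  by_cases h : L a b
  · obtain ⟨m, -, hm⟩ := main a b h
    exact ⟨m, hm⟩
  by_cases h' : L b a
  · obtain ⟨m, h1, hm⟩ := main b a h'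
    exact ⟨m, Csymm _ _ _ _ ((C4b _ _ _ _ h1).1 hm)⟩
  · exact ⟨a, C1 _ _ _ _ (irr _) ⟨h, h'⟩⟩
end

section
/- Archimedean Property of Intervals: for all sounds a, b, c, d with L a b and L c d, there exist a natural number n and a function s : ℕ → S such that s 0 = a, C c d (s i) (s (i+1)) for every i < n, and ¬L (s n) b (that is, laying n copies of the interval [c,d] end to end starting from a reaches or passes b). -/
theorem stmt_10 {S : Type*} (L : S → S → Prop) (C : S → S → S → S → Prop)
    (A1 : ∀ x : S, ¬ L x x)
    (A2 : ∀ x y z : S, L x y → L y z → L x z)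
    (A3 : ∃ x y : S, L x y)
    (A4 : ∀ x y z : S, L x y → ¬ (Ident L x z ∧ Ident L y z))
    (A5a : ∀ x : S, ∃ a b : S, L a x ∧ L x b)
    (A5b : ∀ x y : S, L x y → ∃ a : S, L x a ∧ L a y)
    (C1 : ∀ a a' b b' : S, Ident L a a' → Ident L b b' → C a b a' b')
    (C2 : ∀ a b c d e f : S, C a b c d → C c d e f → C a b e f)
    (C3 : ∀ x y a : S, ∃ b : S, C x y a b ∧ ∀ b' : S, C x y a b' → Ident L b b')
    (C4a : ∀ a b c d : S, L a b → C a b c d → L c d)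
    (C4b : ∀ a b c d : S, L a b → (C a b c d ↔ C b a d c))
    (C5a : ∀ a b c a' b' c' : S, L a b → L b c → C a b a' b' → C b c b' c' → C a c a' c')
    (C5b : ∀ a b c a' b' c' : S, L a b → L b c → C a b b' a' → C b c c' b' → C a c c' a')
    (D : ∀ P Q : Set S, P.Nonempty → Q.Nonempty → Disjoint P Q → P ∪ Q = Set.univ →
      (∀ p ∈ P, ∀ q ∈ Q, ¬ L q p) →
      ∃ θ : S, (∀ x : S, L x θ → x ∈ P) ∧ (∀ x : S, L θ x → x ∈ Q)) :
    ∀ a b c d : S, L a b → L c d →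
      ∃ (n : ℕ) (s : ℕ → S), s 0 = a ∧ (∀ i < n, C c d (s i) (s (i + 1))) ∧ ¬ L (s n) b := by
  intro a b c d _ hcd
  have irefl : ∀ x, Ident L x x := fun x => ⟨A1 x, A1 x⟩
  have isymm : ∀ x y, Ident L x y → Ident L y x := fun x y h => ⟨h.2, h.1⟩
  have uniq : ∀ x y u v w, C x y u v → C x y u w → Ident L v w := by
    intro x y u v w hv hw
    obtain ⟨t, _, ht⟩ := C3 x y u
    have h1 := isymm _ _ (ht v hv)
    have h2 := isymm _ _ (ht w hw)
    exact ⟨fun h => A4 _ _ t h ⟨h1, h2⟩, fun h => A4 _ _ t h ⟨h2, h1⟩⟩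
  have csymm : ∀ x y u v, C x y u v → C u v x y := by
    intro x y u v h
    obtain ⟨w, hw, _⟩ := C3 u v x
    have h1 := C2 _ _ _ _ _ _ h hw
    have h2 := uniq _ _ _ _ _ h1 (C1 x x y y (irefl x) (irefl y))
    exact C2 _ _ _ _ _ _ hw (C1 _ _ _ _ (irefl x) h2)
  -- translating by a fixed interval is strictly monotone
  have mono : ∀ e t x y, C c d e t → C c d x y → L e x → L t y := by
    intro e t x y het hxy hex
    obtain ⟨z, hz, _⟩ := C3 e x t
    have htz : L t z := C4a _ _ _ _ hex hz
    have hLxy : L x y := C4a _ _ _ _ hcd hxy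
    have hxe : C x y e t := C2 _ _ _ _ _ _ (csymm _ _ _ _ hxy) het
    have h1 : C e y e z := C5b e x y z t e hex hLxy hz hxe
    have hyz : Ident L y z := uniq _ _ _ _ _ (C1 e e y y (irefl e) (irefl y)) h1
    by_contra hn
    by_cases hyt : L y t
    · exact hyz.1 (A2 _ _ _ hyt htz)
    · exact A4 t z y htz ⟨⟨hn, hyt⟩, isymm _ _ hyz⟩
  choose f hf _ using C3 c d
  have hstep : ∀ x, L x (f x) := fun x => C4a _ _ _ _ hcd (hf x)
  let s : ℕ → S := fun n => f^[n] a
  have hs : ∀ n, s (n + 1) = f (s n) := fun n => Function.iterate_succ_apply' f n a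
  by_contra hcon
  have hall : ∀ n, L (s n) b := by
    intro n
    by_contra hn
    exact hcon ⟨n, s, rfl, fun i _ => by rw [hs]; exact hf _, hn⟩
  obtain ⟨t, ht1, ht2⟩ := D {x | ∃ n, L x (s n)} {x | ∃ n, L x (s n)}ᶜ
    ⟨a, 1, hstep a⟩
    ⟨b, fun ⟨n, hn⟩ => A1 _ (A2 _ _ _ hn (hall n))⟩
    disjoint_compl_right (Set.union_compl_self _)
    (fun p ⟨n, hn⟩ q hq h => hq ⟨n, A2 _ _ _ h hn⟩)
  have htQ : ∀ n, ¬ L t (s n) := fun n hn =>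
    ht2 _ hn ⟨n + 1, by rw [hs]; exact hstep _⟩
  obtain ⟨e, he, _⟩ := C3 d c t
  have he' : C c d e t := (C4b c d e t hcd).2 he
  obtain ⟨n, hn⟩ := ht1 e (C4a _ _ _ _ hcd he')
  refine htQ (n + 1) ?_
  rw [hs]
  exact mono e t (s n) (f (s n)) he' (hf _) hn
end

section
/- Tonality Characterization: fix a real number k > 1 (the measure of octave intervals). Let E be an equivalence relation on the positive real numbers such that for every x > 0 the set {y : x < y ∧ E x y} has a least element, equal to k·x. Then for all x, y > 0: E x y if and only if y = k^n · x for some integer n. -/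
theorem stmt_17 (k : ℝ) (hk : 1 < k) (E : ℝ → ℝ → Prop)
    (hrefl : ∀ x : ℝ, 0 < x → E x x)
    (hsymm : ∀ x y : ℝ, 0 < x → 0 < y → E x y → E y x)
    (htrans : ∀ x y z : ℝ, 0 < x → 0 < y → 0 < z → E x y → E y z → E x z)
    (hoct : ∀ x : ℝ, 0 < x → IsLeast {y : ℝ | x < y ∧ E x y} (k * x)) :
    ∀ x y : ℝ, 0 < x → 0 < y → (E x y ↔ ∃ n : ℤ, y = k ^ n * x) := by
  have hk0 : 0 < k := by linarith
  have hnat : ∀ (n : ℕ) (x : ℝ), 0 < x → E x (k ^ n * x) := by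
    intro n
    induction n with
    | zero => intro x hx; simpa using hrefl x hx
    | succ n ih =>
      intro x hx
      have h1 : 0 < k ^ n * x := by positivity
      have h2 := (hoct _ h1).1.2
      have h3 : k ^ (n + 1) * x = k * (k ^ n * x) := by ring
      rw [h3]
      exact htrans _ _ _ hx h1 (by positivity) (ih x hx) h2
  have hint : ∀ (n : ℤ) (x : ℝ), 0 < x → E x (k ^ n * x) := by
    intro n x hx
    obtain ⟨m, rfl | rfl⟩ := n.eq_nat_or_neg
    · simpa using hnat m x hx
    · have h1 : 0 < k ^ (-(m : ℤ)) * x := by positivity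
      have h2 := hnat m _ h1
      have h3 : k ^ m * (k ^ (-(m : ℤ)) * x) = x := by
        rw [zpow_neg, zpow_natCast]
        field_simp
      rw [h3] at h2
      exact hsymm _ _ h1 hx h2
  intro x y hx hy
  constructor
  · intro hxy
    obtain ⟨n, hn1, hn2⟩ := exists_mem_Ico_zpow (div_pos hy hx) hk
    refine ⟨n, ?_⟩
    rw [le_div_iff₀ hx] at hn1
    rw [div_lt_iff₀ hx, zpow_add_one₀ hk0.ne'] at hn2
    have hz : 0 < k ^ n * x := by positivity
    by_contra hne
    have hlt : k ^ n * x < y := lt_of_le_of_ne hn1 (Ne.symm hne)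
    have hE : E (k ^ n * x) y :=
      htrans _ _ _ hz hx hy (hsymm _ _ hx hz (hint n x hx)) hxy
    have := (hoct _ hz).2 ⟨hlt, hE⟩
    nlinarith
  · rintro ⟨n, rfl⟩
    exact hint n x hx
end

section
/- A heptatonic diatonic scale is maximally even if and only if it is a circular rearrangement of the major scale. Concretely: let a : ZMod 7 → ℕ with a i ∈ {1, 2} for every i and ∑ i, a i = 12 (the step of size m representing the harmonic interval ε^m, ε = 2^(1/12), with the seven steps multiplying to an octave). Then the following are equivalent: (i) [maximal evenness] for every m with 1 ≤ m ≤ 7 there exists n ∈ ℕ such that for every i ∈ ZMod 7 the cyclic window sum a(i) + a(i+1) + ⋯ + a(i+m-1) equals n or n+1; (ii) there exists t ∈ ZMod 7 such that the sequence (a(t), a(t+1), a(t+2), a(t+3), a(t+4), a(t+5), a(t+6)) equals (2, 2, 1, 2, 2, 2, 1). -/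
theorem all_zmod7 (P : ZMod 7 → Prop) :
    (∀ i, P i) ↔ P 0 ∧ P 1 ∧ P 2 ∧ P 3 ∧ P 4 ∧ P 5 ∧ P 6 := by
  constructor
  · intro h
    exact ⟨h _, h _, h _, h _, h _, h _, h _⟩
  · rintro ⟨h0, h1, h2, h3, h4, h5, h6⟩ i
    change Fin 7 at i
    fin_cases i <;> assumption

theorem sum_zmod7 (a : ZMod 7 → ℕ) :
    ∑ i : ZMod 7, a i = a 0 + a 1 + a 2 + a 3 + a 4 + a 5 + a 6 :=
  Fin.sum_univ_seven (M := ℕ) a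

/-- The decidable core, over two-valued sequences; `true` encodes a whole tone. -/
theorem core_forward : ∀ b : Fin 7 → Bool,
    (∑ i, (if b i then 2 else 1)) = 12 →
    (∀ i k : Fin 7, (∑ j ∈ Finset.range 2, (if b (i + Fin.ofNat 7 j) then 2 else 1)) ≤
      (∑ j ∈ Finset.range 2, (if b (k + Fin.ofNat 7 j) then 2 else 1)) + 1) →
    (∀ i k : Fin 7, (∑ j ∈ Finset.range 3, (if b (i + Fin.ofNat 7 j) then 2 else 1)) ≤
      (∑ j ∈ Finset.range 3, (if b (k + Fin.ofNat 7 j) then 2 else 1)) + 1) →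
    ∃ t : Fin 7, b t = true ∧ b (t + 1) = true ∧ b (t + 2) = false ∧ b (t + 3) = true ∧
      b (t + 4) = true ∧ b (t + 5) = true ∧ b (t + 6) = false := by
  decide +kernel

theorem stmt_18 (a : ZMod 7 → ℕ)
    (hstep : ∀ i : ZMod 7, a i = 1 ∨ a i = 2)
    (hsum : ∑ i : ZMod 7, a i = 12) :
    (∀ m : ℕ, 1 ≤ m → m ≤ 7 → ∃ n : ℕ, ∀ i : ZMod 7,
        (∑ j ∈ Finset.range m, a (i + (j : ZMod 7))) = n ∨
        (∑ j ∈ Finset.range m, a (i + (j : ZMod 7))) = n + 1) ↔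
    (∃ t : ZMod 7, a t = 2 ∧ a (t + 1) = 2 ∧ a (t + 2) = 1 ∧ a (t + 3) = 2 ∧
      a (t + 4) = 2 ∧ a (t + 5) = 2 ∧ a (t + 6) = 1) := by
  constructor
  · intro h
    obtain ⟨b, rfl⟩ : ∃ b : Fin 7 → Bool, a = fun i : Fin 7 => if b i then 2 else 1 := by
      refine ⟨fun i => decide (a i = 2), ?_⟩
      funext i
      rcases hstep i with h | h <;> simp [h]
    obtain ⟨n2, h2⟩ := h 2 (by norm_num) (by norm_num)
    obtain ⟨n3, h3⟩ := h 3 (by norm_num) (by norm_num)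
    obtain ⟨t, e0, e1, e2, e3, e4, e5, e6⟩ := core_forward b hsum
      (fun i k => by
        have hi := h2 i
        have hk := h2 k
        change (∑ j ∈ Finset.range 2, (if b (i + Fin.ofNat 7 j) then 2 else 1)) = _ ∨
          (∑ j ∈ Finset.range 2, (if b (i + Fin.ofNat 7 j) then 2 else 1)) = _ at hi
        change (∑ j ∈ Finset.range 2, (if b (k + Fin.ofNat 7 j) then 2 else 1)) = _ ∨
          (∑ j ∈ Finset.range 2, (if b (k + Fin.ofNat 7 j) then 2 else 1)) = _ at hk
        omega)
      (fun i k => by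
        have hi := h3 i
        have hk := h3 k
        change (∑ j ∈ Finset.range 3, (if b (i + Fin.ofNat 7 j) then 2 else 1)) = _ ∨
          (∑ j ∈ Finset.range 3, (if b (i + Fin.ofNat 7 j) then 2 else 1)) = _ at hi
        change (∑ j ∈ Finset.range 3, (if b (k + Fin.ofNat 7 j) then 2 else 1)) = _ ∨
          (∑ j ∈ Finset.range 3, (if b (k + Fin.ofNat 7 j) then 2 else 1)) = _ at hk
        omega)
    exact ⟨t, if_pos e0, if_pos e1, if_neg (Bool.eq_false_iff.mp e2), if_pos e3, if_pos e4,
      if_pos e5, if_neg (Bool.eq_false_iff.mp e6)⟩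
  · rintro ⟨t, e0, e1, e2, e3, e4, e5, e6⟩
    -- the scale is the translate by `t` of an explicit one
    have ha : ∀ k : ZMod 7, a (t + k) = if k = 2 ∨ k = 6 then 1 else 2 := by
      rw [all_zmod7]
      rw [add_zero, e0, e1, e2, e3, e4, e5, e6]
      decide
    have key : ∀ m : Fin 8, ∀ k : ZMod 7,
        (∑ j ∈ Finset.range m.val,
          if k + (j : ZMod 7) = 2 ∨ k + (j : ZMod 7) = 6 then 1 else 2) = 12 * m.val / 7 ∨
        (∑ j ∈ Finset.range m.val,
          if k + (j : ZMod 7) = 2 ∨ k + (j : ZMod 7) = 6 then 1 else 2) = 12 * m.val / 7 + 1 := by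
      decide +kernel
    intro m _ hm
    refine ⟨12 * m / 7, fun i => ?_⟩
    have hs : ∀ j : ℕ, a (i + (j : ZMod 7)) =
        if (i - t) + (j : ZMod 7) = 2 ∨ (i - t) + (j : ZMod 7) = 6 then 1 else 2 := by
      intro j
      rw [← ha]
      congr 1
      ring
    simp only [hs]
    exact key ⟨m, by omega⟩ (i - t)
end
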